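/- arXiv:2508.18461 — 2 statements merged into one kernel-verified Lean document; each statement's English description precedes it below -/
import Mathlib

section
/- Let C be a strong divisibility sequence, let p be an acceptable prime for C with parameter s = s(p), and let k ≥ 2. For any n ≥ 0, write n = α(p^s)·n' + r with n' ≥ 0 and 0 ≤ r < α(p^s). Then T_{p,k,C}(n, x) = Σ_{λ=0}^{k−1} u_{p,k,C,λ}(r) · T_{p,k,λ}(n', x), where u_{p,k,C,λ}(r) = Σ x^{f_{p,k,C,λ}(r, r⃗) − λ}, the sum over k-tuples r⃗ = (r_1,…,r_k) ∈ {0,1,…,α(p^s)−1}^k with r_1 + ⋯ + r_k = r + λ·α(p^s). -/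
open Finset

/-- A strong divisibility sequence: nonzero integers `Cs 1, Cs 2, ...` with
`gcd (Cs n) (Cs m) = |Cs (gcd n m)|`. -/
def IsStrongDivSeq (Cs : ℕ → ℤ) : Prop :=
  (∀ n, 1 ≤ n → Cs n ≠ 0) ∧
  ∀ m n, 1 ≤ m → 1 ≤ n → Int.gcd (Cs n) (Cs m) = (Cs (Nat.gcd n m)).natAbs

/-- `a` is the rank of apparition of `m` in the sequence `Cs`:
the least index `j ≥ 1` such that `m ∣ Cs j`. -/
def IsRank (Cs : ℕ → ℤ) (m a : ℕ) : Prop :=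
  1 ≤ a ∧ (m : ℤ) ∣ Cs a ∧ ∀ j, 1 ≤ j → (m : ℤ) ∣ Cs j → a ≤ j

/-- The `C`-orial: `0!_C = 1`, `n!_C = Cs 1 * Cs 2 * ⋯ * Cs n`. -/
def Corial (Cs : ℕ → ℤ) : ℕ → ℤ
  | 0 => 1
  | n + 1 => Corial Cs n * Cs (n + 1)

/-- `p` is an acceptable prime for `Cs`, with `α k` the rank of apparition of `p ^ k`
and parameter `s = s(p)`. -/
def AcceptablePrime (Cs : ℕ → ℤ) (p : ℕ) (α : ℕ → ℕ) (s : ℕ) : Prop :=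
  1 ≤ s ∧ (∀ k, 1 ≤ k → IsRank Cs (p ^ k) (α k)) ∧
  (∀ k, s < k → α k = p ^ (k - s) * α s)

/-- The `p`-adic valuation of the `C`-multinomial coefficient,
defined as `ν_p(n!_C) - ∑_i ν_p(m_i!_C)` (an integer). -/
def nuCmulti (p : ℕ) (Cs : ℕ → ℤ) {k : ℕ} (n : ℕ) (m : Fin k → ℕ) : ℤ :=
  (padicValInt p (Corial Cs n) : ℤ) - ∑ i, (padicValInt p (Corial Cs (m i)) : ℤ)

/-- `T_{p,k,C}(n, x)`: the generating polynomial counting `C`-multinomial coefficients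
with `k` parts and top index `n` by their `p`-adic valuations. -/
noncomputable def TmultiC (p k : ℕ) (Cs : ℕ → ℤ) (n : ℕ) : Polynomial ℤ :=
  ∑ m ∈ Finset.Nat.antidiagonalTuple k n, Polynomial.X ^ (nuCmulti p Cs n m).toNat

/-- `T_{p,k}(n, x)`: the generating polynomial counting ordinary multinomial coefficients
with `k` parts and top index `n` by their `p`-adic valuations. -/
noncomputable def TmultiOrd (p k n : ℕ) : Polynomial ℤ :=
  ∑ m ∈ Finset.Nat.antidiagonalTuple k n,
    Polynomial.X ^ (padicValNat p (Nat.multinomial Finset.univ m))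

/-- `T_{p,k,λ}(n, x)`: `0` if `n < λ`, and
`x^(ν_p(n!/(n-λ)!) + λ) · T_{p,k}(n - λ, x)` otherwise. -/
noncomputable def TmultiLam (p k lam n : ℕ) : Polynomial ℤ :=
  if n < lam then 0
  else Polynomial.X ^ ((padicValNat p (Nat.factorial n)
      - padicValNat p (Nat.factorial (n - lam))) + lam) * TmultiOrd p k (n - lam)

/-- `f_{p,k,C,λ}(r, r⃗)` from the acceptable-prime initial vector. -/
def fCmulti (α : ℕ → ℕ) (s : ℕ) {k : ℕ} (lam r : ℕ) (rv : Fin k → ℕ) : ℤ :=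
  (lam : ℤ) * ∑ j ∈ Finset.Icc 1 s, ((α s / α j : ℕ) : ℤ)
  + ∑ j ∈ Finset.Icc 1 s,
      (((r / α j : ℕ) : ℤ) - ∑ i, ((rv i / α j : ℕ) : ℤ))

/-- The acceptable-prime initial vector entry `u_{p,k,C,λ}(r) = ∑ x^(f_{p,k,C,λ}(r,r⃗) - λ)`,
summed over `k`-tuples `r⃗ ∈ {0, …, α(p^s)-1}^k` with `∑ r⃗ = r + λ·α(p^s)`. -/
noncomputable def uAccMulti (α : ℕ → ℕ) (s k lam r : ℕ) : Polynomial ℤ :=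
  ∑ rv ∈ (Fintype.piFinset fun _ : Fin k => Finset.range (α s)).filter
      (fun rv => ∑ i, rv i = r + lam * α s),
    Polynomial.X ^ (fCmulti α s lam r rv - lam).toNat


lemma rank_dvd_iff {Cs : ℕ → ℤ} (hC : IsStrongDivSeq Cs) {q a : ℕ} (h : IsRank Cs q a)
    (m : ℕ) (hm : 1 ≤ m) : (q : ℤ) ∣ Cs m ↔ a ∣ m := by
  obtain ⟨h1, h2, h3⟩ := h
  have hg := hC.2 a m h1 hm
  constructor
  · intro hd
    have h4 : (q : ℤ) ∣ (Int.gcd (Cs m) (Cs a) : ℤ) := Int.dvd_coe_gcd hd h2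
    rw [hg, Int.dvd_natAbs] at h4
    have h5 := h3 _ (Nat.gcd_pos_of_pos_left _ hm) h4
    have h6 : Nat.gcd m a = a :=
      le_antisymm (Nat.le_of_dvd h1 (Nat.gcd_dvd_right _ _)) h5
    rw [← h6]; exact Nat.gcd_dvd_left _ _
  · intro hd
    rw [Nat.gcd_eq_right hd] at hg
    have h4 : ((Cs a).natAbs : ℤ) ∣ Cs m := by
      rw [← hg]; exact Int.gcd_dvd_left _ _
    rw [Int.natAbs_dvd] at h4
    exact h2.trans h4

lemma val_C {Cs : ℕ → ℤ} {p : ℕ} (hp : p.Prime) {α : ℕ → ℕ} {s : ℕ}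
    (hC : IsStrongDivSeq Cs) (hacc : AcceptablePrime Cs p α s) (m : ℕ) (hm : 1 ≤ m) :
    padicValInt p (Cs m) = (∑ j ∈ Icc 1 s, if α j ∣ m then 1 else 0) +
      if α s ∣ m then padicValNat p (m / α s) else 0 := by
  have := Fact.mk hp
  obtain ⟨hs, hrk, hrec⟩ := hacc
  have key : ∀ j, 1 ≤ j → (α j ∣ m ↔ j ≤ padicValInt p (Cs m)) := by
    intro j hj
    rw [← rank_dvd_iff hC (hrk j hj) m hm]
    have := padicValInt_dvd_iff (p := p) j (Cs m)
    push_cast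
    rw [this]
    simp [hC.1 m hm]
  set v := padicValInt p (Cs m) with hv
  have hsum : (∑ j ∈ Icc 1 s, if α j ∣ m then 1 else 0) = min s v := by
    rw [← card_filter]
    have : (Icc 1 s).filter (fun j => α j ∣ m) = Icc 1 (min s v) := by
      ext j
      simp only [mem_filter, mem_Icc]
      constructor
      · rintro ⟨⟨a, b⟩, c⟩
        have := (key j a).1 c
        omega
      · rintro ⟨a, b⟩
        exact ⟨⟨a, by omega⟩, (key j a).2 (by omega)⟩
    rw [this]; simp
  rw [hsum]
  split_ifs with hd
  · have hsv := (key s hs).1 hd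
    have hpos : 0 < α s := (hrk s hs).1
    obtain ⟨t, rfl⟩ := hd
    have ht : t ≠ 0 := by rintro rfl; simp at hm
    rw [Nat.mul_div_cancel_left _ hpos]
    have key2 : ∀ i, i ≤ padicValNat p t ↔ s + i ≤ v := by
      intro i
      rw [← key (s + i) (by omega)]
      rcases Nat.eq_zero_or_pos i with rfl | hi
      · simp
      · rw [hrec (s + i) (by omega), Nat.add_sub_cancel_left, mul_comm,
          Nat.mul_dvd_mul_iff_left hpos, padicValNat_dvd_iff_le ht]
    have a := (key2 _).1 le_rfl
    have b := (key2 (v - s)).2 (by omega)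
    omega
  · have : ¬ s ≤ v := fun h => hd ((key s hs).2 h)
    omega

lemma Corial_ne {Cs : ℕ → ℤ} (hC : IsStrongDivSeq Cs) (n : ℕ) : Corial Cs n ≠ 0 := by
  induction n with
  | zero => simp [Corial]
  | succ n ih => exact mul_ne_zero ih (hC.1 _ (by omega))

lemma val_Corial {Cs : ℕ → ℤ} {p : ℕ} (hp : p.Prime) {α : ℕ → ℕ} {s : ℕ}
    (hC : IsStrongDivSeq Cs) (hacc : AcceptablePrime Cs p α s) (n : ℕ) :
    padicValInt p (Corial Cs n) = (∑ j ∈ Icc 1 s, n / α j) +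
      padicValNat p (n / α s).factorial := by
  have := Fact.mk hp
  induction n with
  | zero => simp [Corial]
  | succ n ih =>
    rw [Corial, padicValInt.mul (Corial_ne hC n) (hC.1 _ (by omega)), ih,
      val_C hp hC hacc (n + 1) (by omega)]
    simp only [Nat.succ_div, sum_add_distrib]
    split_ifs with h
    · rw [Nat.factorial_succ, padicValNat.mul (Nat.succ_ne_zero _) (Nat.factorial_ne_zero _)]
      ring
    · simp; ring

lemma val_split {Cs : ℕ → ℤ} {p : ℕ} (hp : p.Prime) {α : ℕ → ℕ} {s : ℕ}
    (hC : IsStrongDivSeq Cs) (hacc : AcceptablePrime Cs p α s) (q r : ℕ) (hr : r < α s) :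
    padicValInt p (Corial Cs (α s * q + r)) =
      q * (∑ j ∈ Icc 1 s, α s / α j) + (∑ j ∈ Icc 1 s, r / α j) +
      padicValNat p q.factorial := by
  have hpos : 0 < α s := by omega
  rw [val_Corial hp hC hacc, Nat.mul_add_div hpos, Nat.div_eq_of_lt hr, add_zero, mul_sum,
    ← sum_add_distrib]
  congr 1
  apply sum_congr rfl
  intro j hj
  rw [mem_Icc] at hj
  have hd : α j ∣ α s := by
    rw [← rank_dvd_iff hC (hacc.2.1 j hj.1) _ hpos]
    refine dvd_trans ?_ (hacc.2.1 s hacc.1).2.1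
    exact_mod_cast pow_dvd_pow p hj.2
  have hjpos := (hacc.2.1 j hj.1).1
  obtain ⟨t, ht⟩ := hd
  rw [ht, Nat.mul_div_cancel_left _ hjpos, mul_assoc, Nat.mul_add_div hjpos, mul_comm q t]

lemma val_multinomial {p : ℕ} (hp : p.Prime) {k : ℕ} (m : Fin k → ℕ) :
    padicValNat p (∑ i, m i).factorial = (∑ i, padicValNat p (m i).factorial) +
      padicValNat p (Nat.multinomial univ m) := by
  have := Fact.mk hp
  rw [← Nat.multinomial_spec univ m, padicValNat.mul
    (prod_ne_zero_iff.2 fun i _ => Nat.factorial_ne_zero _) (Nat.multinomial_pos _ _).ne']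
  congr 1
  generalize (univ : Finset (Fin k)) = S
  induction S using Finset.induction_on with
  | empty => simp
  | insert a S ha ih =>
    rw [prod_insert ha, sum_insert ha, padicValNat.mul (Nat.factorial_ne_zero _)
      (prod_ne_zero_iff.2 fun i _ => Nat.factorial_ne_zero _), ih]

lemma f_nonneg {Cs : ℕ → ℤ} {p : ℕ} {α : ℕ → ℕ} {s : ℕ}
    (hC : IsStrongDivSeq Cs) (hacc : AcceptablePrime Cs p α s) {k : ℕ} (lam r : ℕ)
    (hr : r < α s) (rv : Fin k → ℕ) (hrv : ∀ i, rv i < α s)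
    (hsum : ∑ i, rv i = r + lam * α s) : 0 ≤ fCmulti α s lam r rv - lam := by
  have hpos : 0 < α s := by omega
  have hterm : ∀ j ∈ Icc 1 s, (if j = s then (lam : ℤ) else 0) ≤
      lam * ((α s / α j : ℕ) : ℤ) + (((r / α j : ℕ) : ℤ) - ∑ i, ((rv i / α j : ℕ) : ℤ)) := by
    intro j hj
    rw [mem_Icc] at hj
    split_ifs with h
    · subst h
      simp [Nat.div_eq_of_lt hr, Nat.div_eq_of_lt (hrv _), Nat.div_self hpos]
    · have hd : α j ∣ α s := by
        rw [← rank_dvd_iff hC (hacc.2.1 j hj.1) _ hpos]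
        refine dvd_trans ?_ (hacc.2.1 s hacc.1).2.1
        exact_mod_cast pow_dvd_pow p hj.2
      have hjpos : 0 < α j := (hacc.2.1 j hj.1).1
      have h1 : ∑ i, rv i / α j ≤ (∑ i, rv i) / α j := by
        rw [Nat.le_div_iff_mul_le hjpos, sum_mul]
        exact sum_le_sum fun i _ => Nat.div_mul_le_self _ _
      have h2 : (∑ i, rv i) / α j = lam * (α s / α j) + r / α j := by
        rw [hsum]
        obtain ⟨t, ht⟩ := hd
        rw [ht, Nat.mul_div_cancel_left _ hjpos, add_comm,
          show lam * (α j * t) = α j * (lam * t) by ring, Nat.mul_add_div hjpos]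
      rw [h2] at h1
      zify at h1
      push_cast
      linarith
  have := sum_le_sum hterm
  rw [sum_ite_eq' , if_pos (mem_Icc.2 ⟨hacc.1, le_rfl⟩), sum_add_distrib, ← mul_sum] at this
  unfold fCmulti
  linarith

lemma exponent_eq {Cs : ℕ → ℤ} {p : ℕ} (hp : p.Prime) {α : ℕ → ℕ} {s : ℕ}
    (hC : IsStrongDivSeq Cs) (hacc : AcceptablePrime Cs p α s) {k : ℕ} (lam n' r : ℕ)
    (hr : r < α s) (rv m' : Fin k → ℕ) (hrv : ∀ i, rv i < α s)
    (hsum : ∑ i, rv i = r + lam * α s) (hm : ∑ i, m' i + lam = n') :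
    (nuCmulti p Cs (α s * n' + r) (fun i => α s * m' i + rv i)).toNat =
      (fCmulti α s lam r rv - lam).toNat +
      ((padicValNat p n'.factorial - padicValNat p (n' - lam).factorial + lam) +
        padicValNat p (Nat.multinomial univ m')) := by
  have := Fact.mk hp
  have h0 := f_nonneg hC hacc lam r hr rv hrv hsum
  have hle : padicValNat p (n' - lam).factorial ≤ padicValNat p n'.factorial := by
    rw [← padicValNat_dvd_iff_le (Nat.factorial_ne_zero _)]
    exact pow_padicValNat_dvd.trans (Nat.factorial_dvd_factorial (Nat.sub_le _ _))
  have hmul := val_multinomial hp m'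
  have hn : n' - lam = ∑ i, m' i := by omega
  rw [hn] at hle ⊢
  suffices h : nuCmulti p Cs (α s * n' + r) (fun i => α s * m' i + rv i) =
      (fCmulti α s lam r rv - lam) +
      ((padicValNat p n'.factorial : ℤ) - padicValNat p (∑ i, m' i).factorial + lam +
        padicValNat p (Nat.multinomial univ m')) by
    omega
  unfold nuCmulti fCmulti
  rw [val_split hp hC hacc n' r hr]
  simp only [val_split hp hC hacc _ _ (hrv _)]
  zify at hmul hm
  push_cast
  simp only [sum_add_distrib, sum_sub_distrib, ← sum_mul]
  rw [sum_comm (s := Icc 1 s), hmul, ← hm]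
  ring

theorem stmt3 (Cs : ℕ → ℤ) (p : ℕ) (hp : p.Prime) (α : ℕ → ℕ) (s : ℕ)
    (hC : IsStrongDivSeq Cs) (hacc : AcceptablePrime Cs p α s)
    (k : ℕ) (hk : 2 ≤ k) (n' r : ℕ) (hr : r < α s) :
    TmultiC p k Cs (α s * n' + r) =
      ∑ lam ∈ Finset.range k, uAccMulti α s k lam r * TmultiLam p k lam n' := by
  have hpos : 0 < α s := by omega
  have hT : ∀ lam, TmultiLam p k lam n' =
      ∑ m ∈ (if n' < lam then ∅ else Finset.Nat.antidiagonalTuple k (n' - lam)),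
        Polynomial.X ^ ((padicValNat p n'.factorial - padicValNat p (n' - lam).factorial + lam) +
        padicValNat p (Nat.multinomial univ m)) := by
    intro lam
    unfold TmultiLam TmultiOrd
    split_ifs
    · simp
    · simp only [mul_sum, pow_add]
  simp only [hT, uAccMulti, sum_mul_sum, ← sum_product', ← pow_add]
  rw [sum_sigma', TmultiC]
  symm
  have memS : ∀ x : (_ : ℕ) × ((Fin k → ℕ) × (Fin k → ℕ)),
      x ∈ (range k).sigma (fun lam => ((Fintype.piFinset fun _ : Fin k => range (α s)).filter
        (fun rv => ∑ i, rv i = r + lam * α s)) ×ˢ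
        (if n' < lam then ∅ else Finset.Nat.antidiagonalTuple k (n' - lam))) ↔
      x.1 < k ∧ ((∀ i, x.2.1 i < α s) ∧ ∑ i, x.2.1 i = r + x.1 * α s) ∧
        ∑ i, x.2.2 i + x.1 = n' := by
    intro x
    simp only [mem_sigma, mem_range, mem_product, mem_filter, Fintype.mem_piFinset]
    refine and_congr_right fun _ => and_congr_right fun _ => ?_
    split_ifs
    · simp; omega
    · rw [Finset.Nat.mem_antidiagonalTuple]; omega
  refine sum_bij' (fun x _ => fun i => α s * x.2.2 i + x.2.1 i)
    (fun m _ => ⟨(∑ i, m i % α s) / α s, (fun i => m i % α s), (fun i => m i / α s)⟩)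
    ?_ ?_ ?_ ?_ ?_
  · intro x hx
    obtain ⟨h1, ⟨h2, h3⟩, h4⟩ := (memS x).1 hx
    rw [Finset.Nat.mem_antidiagonalTuple, sum_add_distrib, ← mul_sum, h3, ← h4]
    ring
  · intro m hm
    rw [Finset.Nat.mem_antidiagonalTuple] at hm
    rw [memS]
    have e : α s * (∑ i, m i / α s) + ∑ i, m i % α s = α s * n' + r := by
      rw [← hm, mul_sum, ← sum_add_distrib]
      exact sum_congr rfl fun i _ => Nat.div_add_mod _ _
    have hlt : ∑ i, m i % α s < k * α s := by
      have : Nonempty (Fin k) := ⟨⟨0, by omega⟩⟩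
      calc _ < ∑ i : Fin k, α s :=
            sum_lt_sum_of_nonempty univ_nonempty fun i _ => Nat.mod_lt _ hpos
        _ = _ := by simp
    have e2 := congrArg (· % α s) e
    have e3 := congrArg (· / α s) e
    simp only [Nat.mul_add_mod, Nat.mul_add_div hpos, Nat.mod_eq_of_lt hr,
      Nat.div_eq_of_lt hr] at e2 e3
    refine ⟨(Nat.div_lt_iff_lt_mul hpos).2 hlt, ⟨fun i => Nat.mod_lt _ hpos, ?_⟩, ?_⟩
    · have := Nat.div_add_mod (∑ i, m i % α s) (α s)
      dsimp only
      rw [e2] at this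
      nlinarith
    · simpa using e3
  · intro x hx
    obtain ⟨h1, ⟨h2, h3⟩, h4⟩ := (memS x).1 hx
    obtain ⟨lam, rv, m'⟩ := x
    dsimp only at *
    simp only [Nat.mul_add_mod, Nat.mul_add_div hpos, Nat.mod_eq_of_lt (h2 _),
      Nat.div_eq_of_lt (h2 _), h3, add_zero]
    rw [Nat.add_mul_div_right _ _ hpos, Nat.div_eq_of_lt hr, zero_add]
  · intro m hm
    funext i
    exact Nat.div_add_mod _ _
  · intro x hx
    obtain ⟨h1, ⟨h2, h3⟩, h4⟩ := (memS x).1 hx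
    rw [exponent_eq hp hC hacc x.1 n' r hr x.2.1 x.2.2 h2 h3 h4]
end

section
/- Let C be a strong divisibility sequence and let p be an ideal prime for C with parameter s = s(p). Then for every integer n ≥ 0, ν_p(n!_C) = s·⌊n/α(p)⌋ + ν_p(⌊n/α(p)⌋!). -/
open Finset

/-- `p` is an ideal prime for `Cs`, with `α k` the rank of apparition of `p ^ k`
and parameter `s = s(p)`. -/
def IdealPrime (Cs : ℕ → ℤ) (p : ℕ) (α : ℕ → ℕ) (s : ℕ) : Prop :=
  1 ≤ s ∧ (∀ k, 1 ≤ k → IsRank Cs (p ^ k) (α k)) ∧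
  (∀ k, 1 ≤ k → k ≤ s → α k = α 1) ∧
  (∀ k, s < k → α k = p ^ (k - s) * α 1)

theorem stmt6_dvd_iff (Cs : ℕ → ℤ) (hC : IsStrongDivSeq Cs) (m a : ℕ) (h : IsRank Cs m a)
    (n : ℕ) (hn : 1 ≤ n) : (m : ℤ) ∣ Cs n ↔ a ∣ n := by
  obtain ⟨ha, hd, hmin⟩ := h
  have hg := hC.2 a n ha hn
  constructor
  · intro hm
    have h1 : (m : ℤ) ∣ ((Int.gcd (Cs n) (Cs a) : ℕ) : ℤ) := Int.dvd_coe_gcd hm hd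
    rw [hg, Int.dvd_natAbs] at h1
    have h2 := hmin _ (Nat.gcd_pos_of_pos_left _ hn) h1
    have h3 : Nat.gcd n a = a := le_antisymm (Nat.gcd_le_right _ ha) h2
    rw [← h3]
    exact Nat.gcd_dvd_left _ _
  · intro han
    rw [Nat.gcd_eq_right han] at hg
    have h1 : ((Int.gcd (Cs n) (Cs a) : ℕ) : ℤ) ∣ Cs n := Int.gcd_dvd_left _ _
    rw [hg, Int.natAbs_dvd] at h1
    exact hd.trans h1

theorem stmt6_val (Cs : ℕ → ℤ) (p : ℕ) (hp : p.Prime) (α : ℕ → ℕ) (s : ℕ)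
    (hC : IsStrongDivSeq Cs) (hid : IdealPrime Cs p α s) (m : ℕ) (hm : 1 ≤ m) :
    padicValInt p (Cs (α 1 * m)) = s + padicValNat p m := by
  have := Fact.mk hp
  obtain ⟨hs, hr, h1, h2⟩ := hid
  have ha : 1 ≤ α 1 := (hr 1 le_rfl).1
  have hn : 1 ≤ α 1 * m := Nat.mul_pos ha hm
  have key : ∀ k, s < k → (((p : ℤ) ^ k ∣ Cs (α 1 * m)) ↔ k - s ≤ padicValNat p m) := by
    intro k hk
    have := stmt6_dvd_iff Cs hC _ _ (hr k (by omega)) _ hn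
    push_cast at this
    rw [this, h2 k hk, mul_comm, Nat.mul_dvd_mul_iff_left ha,
      padicValNat_dvd_iff_le (by omega)]
  have key2 : ∀ k, ((p : ℤ) ^ k ∣ Cs (α 1 * m)) ↔ k ≤ padicValInt p (Cs (α 1 * m)) := by
    intro k
    rw [padicValInt_dvd_iff]
    simp [hC.1 _ hn]
  have hsd : s ≤ padicValInt p (Cs (α 1 * m)) := by
    rw [← key2]
    have := stmt6_dvd_iff Cs hC _ _ (hr s hs) _ hn
    push_cast at this
    rw [this, h1 s hs le_rfl]
    exact Nat.dvd_mul_right _ _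
  apply le_antisymm
  · by_contra hlt
    have h3 := (key (s + padicValNat p m + 1) (by omega)).1 ((key2 _).2 (by omega))
    omega
  · rcases Nat.eq_zero_or_pos (padicValNat p m) with h0 | h0
    · omega
    · exact (key2 _).1 ((key _ (by omega)).2 (by omega))

theorem stmt6_ne (Cs : ℕ → ℤ) (hC : IsStrongDivSeq Cs) (n : ℕ) : Corial Cs n ≠ 0 := by
  induction n with
  | zero => simp [Corial]
  | succ n ih => exact mul_ne_zero ih (hC.1 _ (by omega))

theorem stmt6 (Cs : ℕ → ℤ) (p : ℕ) (hp : p.Prime) (α : ℕ → ℕ) (s : ℕ)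
    (hC : IsStrongDivSeq Cs) (hid : IdealPrime Cs p α s) (n : ℕ) :
    padicValInt p (Corial Cs n) =
      s * (n / α 1) + padicValNat p (Nat.factorial (n / α 1)) := by
  have := Fact.mk hp
  have ha : 1 ≤ α 1 := (hid.2.1 1 le_rfl).1
  induction n with
  | zero => simp [Corial]
  | succ n ih =>
    have hmul : padicValInt p (Corial Cs (n + 1)) =
        padicValInt p (Corial Cs n) + padicValInt p (Cs (n + 1)) :=
      padicValInt.mul (stmt6_ne Cs hC n) (hC.1 _ (by omega))
    rw [hmul, ih, Nat.succ_div]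
    by_cases hd : α 1 ∣ n + 1
    · have he : α 1 * (n / α 1 + 1) = n + 1 := by
        have h := Nat.mul_div_cancel' hd
        rwa [Nat.succ_div, if_pos hd] at h
      have hv := stmt6_val Cs p hp α s hC hid (n / α 1 + 1) (Nat.succ_pos _)
      rw [he] at hv
      rw [if_pos hd, hv, Nat.factorial_succ,
        padicValNat.mul (Nat.succ_ne_zero _) (Nat.factorial_ne_zero _)]
      ring
    · have h0 : padicValInt p (Cs (n + 1)) = 0 := by
        apply padicValInt.eq_zero_of_not_dvd
        intro h
        apply hd
        apply (stmt6_dvd_iff Cs hC _ _ (hid.2.1 1 le_rfl) _ (by omega)).1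
        simpa using h
      rw [if_neg hd, h0]
      rfl
end
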